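/- Finite-dimensional version of the main theorem (Onsager–Machlup converges to Freidlin–Wentzell): Let γ be the standard Gaussian measure on E = EuclideanSpace ℝ (Fin d) and γ_ε the pushforward of γ under x ↦ εx. For ε > 0 let F^ε : E → ℝ admit the expansion F^ε(y) = F₀(y) + ε F₁(y) + ⋯ + (ε^{n−1}/(n−1)!) F_{n−1}(y) + εⁿ R_n(ε, y), where F₀ is continuous; lim_{ε→0⁺} R_n(ε, y) = 0 for every y; every point has a neighborhood on which all |F_i| and, for all small ε, |R_n(ε,·)| are bounded by a common constant; and for every 0 ≤ i ≤ n−1 and every γ' > 0, limsup_{ε→0⁺} ε² log ∫ exp(γ' max{|F_i(y)|, |R_n(ε,y)|}/ε²) dγ_ε(y) < ∞. Suppose Z_ε := ∫ exp(−F^ε(y)/ε²) dγ_ε(y) ∈ (0,∞), define μ^ε(A) = Z_ε^{−1} ∫_A exp(−F^ε(y)/ε²) dγ_ε(y), and assume (μ^ε) is exponentially tight. Set OM_ε(z) := (F^ε(z) + ‖z‖²/2)/ε² and FW(z) := F₀(z) + ‖z‖²/2 − inf_{w∈E} (F₀(w) + ‖w‖²/2). Then: (i) (μ^ε) satisfies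 the LDP with speed ε² and good rate function FW; (ii) for every z ∈ E, lim_{ε→0⁺} ε² OM_ε(z) = F₀(z) + ‖z‖²/2; and (iii) the functions ε² OM_ε Γ-converge to z ↦ F₀(z) + ‖z‖²/2 as ε → 0⁺. -/

import Mathlib

open MeasureTheory Filter Metric Set Topology Real

/-- A family of Borel measures `(μ ε)_{ε>0}` satisfies the large deviation principle with
speed `ε²` and good rate function `I : X → EReal`. -/
def HasLDP {X : Type*} [TopologicalSpace X] [MeasurableSpace X]
    (μ : ℝ → Measure X) (I : X → EReal) : Prop :=
  (∀ x, 0 ≤ I x) ∧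
  LowerSemicontinuous I ∧
  (∀ c : ℝ, IsCompact {x | I x ≤ (c : EReal)}) ∧
  (∀ F : Set X, IsClosed F →
    Filter.limsup (fun ε : ℝ => ((ε ^ 2 : ℝ) : EReal) * ENNReal.log (μ ε F))
      (𝓝[>] (0 : ℝ)) ≤ -⨅ x ∈ F, I x) ∧
  (∀ G : Set X, IsOpen G →
    -⨅ x ∈ G, I x ≤
      Filter.liminf (fun ε : ℝ => ((ε ^ 2 : ℝ) : EReal) * ENNReal.log (μ ε G))
        (𝓝[>] (0 : ℝ)))

/-- A family of Borel measures `(μ ε)_{ε>0}` is exponentially tight (at speed `ε²`). -/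
def ExpTight {X : Type*} [TopologicalSpace X] [MeasurableSpace X]
    (μ : ℝ → Measure X) : Prop :=
  ∀ α : ℝ, 0 < α → ∃ K : Set X, IsCompact K ∧
    Filter.limsup (fun ε : ℝ => ((ε ^ 2 : ℝ) : EReal) * ENNReal.log (μ ε Kᶜ))
      (𝓝[>] (0 : ℝ)) ≤ ((-α : ℝ) : EReal)

/-- The Γ-lower limit at `z`, as `ε → 0⁺`. -/
noncomputable def GammaLiminf {X : Type*} [TopologicalSpace X]
    (G : ℝ → X → EReal) (z : X) : EReal :=
  ⨆ N ∈ 𝓝 z, Filter.liminf (fun ε : ℝ => ⨅ y ∈ N, G ε y) (𝓝[>] (0 : ℝ))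

/-- The Γ-upper limit at `z`, as `ε → 0⁺`. -/
noncomputable def GammaLimsup {X : Type*} [TopologicalSpace X]
    (G : ℝ → X → EReal) (z : X) : EReal :=
  ⨆ N ∈ 𝓝 z, Filter.limsup (fun ε : ℝ => ⨅ y ∈ N, G ε y) (𝓝[>] (0 : ℝ))

/-!
The density of `γ_ε` is a constant multiple of `e^{-‖x‖²/(2ε²)}`, so `μ^ε` is the Gibbs measure
`Z⁻¹ e^{-Φ_ε/ε²} dx` with potential `Φ_ε = F^ε + ‖·‖²/2 = ε² OM_ε`. By the local bounds on the
expansion, `Φ_ε` converges to `Φ = F₀ + ‖·‖²/2` locally uniformly. Laplace's method estimates the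
unnormalised mass of compact sets from above and of open sets from below. Exponential tightness
keeps half of the partition function `Z` on a compact set; hence `Φ` attains its minimum and
`-ε² log Z → min Φ`, which gives the weak large deviation principle, and tightness upgrades it to
the full one. Locally uniform convergence to a continuous limit is continuous convergence, so it
yields the pointwise limit and the Γ-limit of `ε² OM_ε` at once.
-/

/-- The exponential scale `e^{a/ε²}` of large deviations at speed `ε²`, valued in `ℝ≥0∞` so that it
can be compared with measures. -/
noncomputable def expScale (a ε : ℝ) : ENNReal :=
  ENNReal.ofReal (exp (a / ε ^ 2))

section ExpScale

variable {a b ε : ℝ}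

lemma expScale_ne_zero : expScale a ε ≠ 0 :=
  (ENNReal.ofReal_pos.2 (exp_pos _)).ne'

lemma expScale_ne_top : expScale a ε ≠ ⊤ :=
  ENNReal.ofReal_ne_top

lemma expScale_add : expScale (a + b) ε = expScale a ε * expScale b ε := by
  rw [expScale, add_div, exp_add, ENNReal.ofReal_mul (exp_pos _).le, expScale, expScale]

lemma expScale_zero : expScale 0 ε = 1 := by
  simp [expScale]

lemma expScale_le_expScale_iff (hε : 0 < ε) : expScale a ε ≤ expScale b ε ↔ a ≤ b := by
  rw [expScale, expScale, ENNReal.ofReal_le_ofReal_iff (exp_pos _).le, exp_le_exp,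
    div_le_div_iff_of_pos_right (by positivity)]

lemma expScale_add_le_mul_iff {x : ENNReal} :
    expScale (a + b) ε ≤ expScale a ε * x ↔ expScale b ε ≤ x := by
  rw [expScale_add, ENNReal.mul_le_mul_iff_right expScale_ne_zero expScale_ne_top]

lemma mul_le_expScale_add_iff {x : ENNReal} :
    expScale a ε * x ≤ expScale (a + b) ε ↔ x ≤ expScale b ε := by
  rw [expScale_add, ENNReal.mul_le_mul_iff_right expScale_ne_zero expScale_ne_top]

lemma tendsto_expScale_nhds_top (ha : 0 < a) :
    Tendsto (expScale a) (𝓝[>] 0) (𝓝 ⊤) := by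
  have hsq : Tendsto (fun ε : ℝ => ε ^ 2) (𝓝[>] 0) (𝓝[>] 0) :=
    tendsto_nhdsWithin_iff.2 ⟨((continuous_pow 2).tendsto' 0 0 (by simp)).mono_left
      nhdsWithin_le_nhds, eventually_mem_nhdsWithin.mono fun _ hε => pow_pos (mem_Ioi.1 hε) 2⟩
  have hdiv : Tendsto (fun ε : ℝ => a / ε ^ 2) (𝓝[>] 0) atTop := by
    simpa only [div_eq_mul_inv, Function.comp_def] using
      (tendsto_inv_nhdsGT_zero.comp hsq).const_mul_atTop ha
  exact ENNReal.tendsto_ofReal_nhds_top.2 (tendsto_exp_atTop.comp hdiv)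

lemma eventually_const_mul_expScale_le {C : ENNReal} (hC : C ≠ ⊤) (hab : a < b) :
    ∀ᶠ ε in 𝓝[>] 0, C * expScale a ε ≤ expScale b ε := by
  filter_upwards [(tendsto_expScale_nhds_top (sub_pos.2 hab)).eventually
    (eventually_ge_nhds hC.lt_top)] with ε hε
  rw [← add_sub_cancel a b, expScale_add, mul_comm]
  gcongr

lemma eventually_expScale_le_const_mul {C : ENNReal} (hC : C ≠ 0) (hab : a < b) :
    ∀ᶠ ε in 𝓝[>] 0, expScale a ε ≤ C * expScale b ε := by
  filter_upwards [eventually_const_mul_expScale_le (ENNReal.inv_ne_top.2 hC) hab] with ε hε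
  rwa [mul_comm, ← div_eq_mul_inv, ENNReal.div_le_iff_le_mul (.inl hC) (.inr expScale_ne_zero),
    mul_comm] at hε

lemma sq_mul_log_le_iff (hε : 0 < ε) {x : ENNReal} :
    ((ε ^ 2 : ℝ) : EReal) * ENNReal.log x ≤ a ↔ x ≤ expScale a ε := by
  have hsq : (0 : EReal) < (ε ^ 2 : ℝ) := by exact_mod_cast pow_pos hε 2
  rw [← ENNReal.log_le_log_iff, expScale, ENNReal.log_ofReal_of_pos (exp_pos _), log_exp,
    EReal.coe_div, EReal.le_div_iff_mul_le hsq (EReal.coe_ne_top _), mul_comm]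

lemma le_sq_mul_log_iff (hε : 0 < ε) {x : ENNReal} :
    a ≤ ((ε ^ 2 : ℝ) : EReal) * ENNReal.log x ↔ expScale a ε ≤ x := by
  have hsq : (0 : EReal) < (ε ^ 2 : ℝ) := by exact_mod_cast pow_pos hε 2
  rw [← ENNReal.log_le_log_iff, expScale, ENNReal.log_ofReal_of_pos (exp_pos _), log_exp,
    EReal.coe_div, EReal.div_le_iff_le_mul hsq (EReal.coe_ne_top _)]

lemma limsup_sq_mul_log_le_iff {u : ℝ → ENNReal} {A : EReal} :
    limsup (fun ε : ℝ => ((ε ^ 2 : ℝ) : EReal) * ENNReal.log (u ε)) (𝓝[>] 0) ≤ A ↔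
      ∀ b : ℝ, A < b → ∀ᶠ ε in 𝓝[>] 0, u ε ≤ expScale b ε := by
  constructor
  · intro h b hb
    filter_upwards [eventually_lt_of_limsup_lt (h.trans_lt hb), self_mem_nhdsWithin] with ε hlt hε
    exact (sq_mul_log_le_iff hε).1 hlt.le
  · intro h
    refine EReal.le_of_forall_lt_iff_le.1 fun b hb => limsup_le_of_le (by isBoundedDefault) ?_
    filter_upwards [h b hb, self_mem_nhdsWithin] with ε hle hε
    exact (sq_mul_log_le_iff hε).2 hle

lemma le_liminf_sq_mul_log {u : ℝ → ENNReal} {A : EReal}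
    (h : ∀ b : ℝ, b < A → ∀ᶠ ε in 𝓝[>] 0, expScale b ε ≤ u ε) :
    A ≤ liminf (fun ε : ℝ => ((ε ^ 2 : ℝ) : EReal) * ENNReal.log (u ε)) (𝓝[>] 0) := by
  refine EReal.ge_of_forall_gt_iff_ge.1 fun b hb => le_liminf_of_le (by isBoundedDefault) ?_
  filter_upwards [h b hb, self_mem_nhdsWithin] with ε hle hε
  exact (le_sq_mul_log_iff hε).2 hle

end ExpScale

section WeakLDP

variable {X : Type*} [TopologicalSpace X] [MeasurableSpace X] {μ : ℝ → Measure X}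

/-- The weak large deviation principle with speed `ε²` and rate function `I`: the upper bound is
required for compact sets only, and `I` need not have compact sublevel sets. -/
structure HasWeakLDP (μ : ℝ → Measure X) (I : X → EReal) : Prop where
  nonneg : ∀ x, 0 ≤ I x
  lowerSemicontinuous : LowerSemicontinuous I
  limsup_le : ∀ K : Set X, IsCompact K →
    limsup (fun ε : ℝ => ((ε ^ 2 : ℝ) : EReal) * ENNReal.log (μ ε K)) (𝓝[>] 0) ≤ -⨅ x ∈ K, I x
  le_liminf : ∀ G : Set X, IsOpen G →
    -⨅ x ∈ G, I x ≤ liminf (fun ε : ℝ => ((ε ^ 2 : ℝ) : EReal) * ENNReal.log (μ ε G)) (𝓝[>] 0)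

lemma ExpTight.exists_isCompact_limsup_lt (h : ExpTight μ) (a : ℝ) :
    ∃ K : Set X, IsCompact K ∧
      limsup (fun ε : ℝ => ((ε ^ 2 : ℝ) : EReal) * ENNReal.log (μ ε Kᶜ)) (𝓝[>] 0) < a := by
  obtain ⟨K, hK, hle⟩ := h (|a| + 1) (by positivity)
  refine ⟨K, hK, hle.trans_lt (EReal.coe_lt_coe_iff.2 ?_)⟩
  linarith [neg_abs_le a]

lemma ExpTight.exists_isCompact_eventually_le (h : ExpTight μ) (a : ℝ) :
    ∃ K : Set X, IsCompact K ∧ ∀ᶠ ε in 𝓝[>] 0, μ ε Kᶜ ≤ expScale a ε :=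
  let ⟨K, hK, hlt⟩ := h.exists_isCompact_limsup_lt a
  ⟨K, hK, limsup_sq_mul_log_le_iff.1 le_rfl a hlt⟩

lemma HasWeakLDP.isCompact_sublevel [T2Space X] {I : X → EReal} (h : HasWeakLDP μ I)
    (hμ : ExpTight μ) (c : ℝ) : IsCompact {x | I x ≤ c} := by
  obtain ⟨K, hK, hlt⟩ := hμ.exists_isCompact_limsup_lt (-c)
  refine hK.of_isClosed_subset (h.lowerSemicontinuous.isClosed_preimage _) fun x hx => ?_
  by_contra hxK
  have hInf : ⨅ y ∈ Kᶜ, I y ≤ c := (iInf₂_le x hxK).trans hx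
  refine hlt.not_ge ?_
  calc ((-c : ℝ) : EReal) ≤ -⨅ y ∈ Kᶜ, I y := EReal.neg_le_neg_iff.2 hInf
    _ ≤ _ := h.le_liminf _ hK.isClosed.isOpen_compl
    _ ≤ _ := liminf_le_limsup

lemma HasWeakLDP.limsup_le_of_isClosed {I : X → EReal} (h : HasWeakLDP μ I)
    (hμ : ExpTight μ) {F : Set X} (hF : IsClosed F) :
    limsup (fun ε : ℝ => ((ε ^ 2 : ℝ) : EReal) * ENNReal.log (μ ε F)) (𝓝[>] 0)
      ≤ -⨅ x ∈ F, I x := by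
  refine limsup_sq_mul_log_le_iff.2 fun b hb => ?_
  obtain ⟨a, ha, hab⟩ := EReal.lt_iff_exists_real_btwn.1 hb
  obtain ⟨K, hK, hKc⟩ := hμ.exists_isCompact_eventually_le a
  have hFK : -⨅ x ∈ F ∩ K, I x < a :=
    (EReal.neg_le_neg_iff.2 (biInf_mono fun _ hx => hx.1)).trans_lt ha
  filter_upwards [hKc, limsup_sq_mul_log_le_iff.1 (h.limsup_le _ (hK.inter_left hF)) a hFK,
    eventually_const_mul_expScale_le (C := 2) ENNReal.ofNat_ne_top (EReal.coe_lt_coe_iff.1 hab)]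
    with ε hcompl hinter habsorb
  calc μ ε F ≤ μ ε (F ∩ K ∪ Kᶜ) := measure_mono fun x hx => by
        by_cases hxK : x ∈ K <;> simp [hx, hxK]
    _ ≤ μ ε (F ∩ K) + μ ε Kᶜ := measure_union_le _ _
    _ ≤ 2 * expScale a ε := by rw [two_mul]; gcongr
    _ ≤ expScale b ε := habsorb

theorem HasWeakLDP.hasLDP [T2Space X] {I : X → EReal} (h : HasWeakLDP μ I) (hμ : ExpTight μ) :
    HasLDP μ I :=
  ⟨h.nonneg, h.lowerSemicontinuous, h.isCompact_sublevel hμ,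
    fun _ => h.limsup_le_of_isClosed hμ, h.le_liminf⟩

end WeakLDP

section Gibbs

variable {X : Type*} [MeasurableSpace X]

/-- The unnormalised Gibbs measure `e^{-Φ/ε²} ν`. -/
noncomputable def gibbsMeasure (ν : Measure X) (Φ : X → ℝ) (ε : ℝ) : Measure X :=
  ν.withDensity fun x => expScale (-Φ x) ε

/-- The family `μ ε` consists of the Gibbs probability measures `Z_ε⁻¹ e^{-Φ_ε/ε²} ν_ε`. The
normalisation is multiplied out, so that no reciprocal of `Z_ε` occurs. -/
def IsGibbsFamily (ν : ℝ → Measure X) (Φ : ℝ → X → ℝ) (μ : ℝ → Measure X) : Prop :=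
  ∀ ε, 0 < ε → IsProbabilityMeasure (μ ε) ∧
    ∃ Z : ENNReal, gibbsMeasure (ν ε) (Φ ε) ε = Z • μ ε

lemma gibbsMeasure_smul_measure {ν : Measure X} {Φ : X → ℝ} {ε : ℝ} (c : ENNReal) :
    gibbsMeasure (c • ν) Φ ε = c • gibbsMeasure ν Φ ε :=
  withDensity_smul_measure _ _

lemma gibbsMeasure_gibbsMeasure {ν : Measure X} {V : X → ℝ} (hV : Measurable V) (F : X → ℝ)
    (ε : ℝ) : gibbsMeasure (gibbsMeasure ν V ε) F ε = gibbsMeasure ν (fun x => F x + V x) ε := by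
  have hdens : Measurable fun x => expScale (-V x) ε := by unfold expScale; fun_prop
  ext A hA
  rw [gibbsMeasure, gibbsMeasure, gibbsMeasure, withDensity_apply _ hA, withDensity_apply _ hA,
    setLIntegral_withDensity_eq_setLIntegral_mul_non_measurable _ hdens _ hA
      (.of_forall fun _ => expScale_ne_top.lt_top)]
  simp only [Pi.mul_apply, ← expScale_add, neg_add_rev]

lemma isGibbsFamily_of_apply_eq_div {ν μ : ℝ → Measure X} {Φ : ℝ → X → ℝ}
    (hZ : ∀ ε, 0 < ε → 0 < ∫⁻ x, expScale (-Φ ε x) ε ∂ν ε ∧ ∫⁻ x, expScale (-Φ ε x) ε ∂ν ε < ⊤)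
    (hμ : ∀ ε, 0 < ε → ∀ A, MeasurableSet A →
      μ ε A = (∫⁻ x in A, expScale (-Φ ε x) ε ∂ν ε) / ∫⁻ x, expScale (-Φ ε x) ε ∂ν ε) :
    IsGibbsFamily ν Φ μ := by
  intro ε hε
  obtain ⟨hpos, hfin⟩ := hZ ε hε
  refine ⟨⟨?_⟩, ∫⁻ x, expScale (-Φ ε x) ε ∂ν ε, ?_⟩
  · rw [hμ ε hε _ .univ, setLIntegral_univ, ENNReal.div_self hpos.ne' hfin.ne]
  · ext A hA
    rw [gibbsMeasure, withDensity_apply _ hA, Measure.smul_apply, smul_eq_mul, hμ ε hε A hA,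
      ENNReal.mul_div_cancel hpos.ne' hfin.ne]

lemma IsGibbsFamily.of_eq_smul_gibbsMeasure {γ μ : ℝ → Measure X} {F : ℝ → X → ℝ}
    {ν : Measure X} {V : X → ℝ} (h : IsGibbsFamily γ F μ) (hV : Measurable V)
    (hγ : ∀ ε, 0 < ε → ∃ c : ENNReal, c ≠ 0 ∧ c ≠ ⊤ ∧ γ ε = c • gibbsMeasure ν V ε) :
    IsGibbsFamily (fun _ => ν) (fun ε x => F ε x + V x) μ := by
  intro ε hε
  obtain ⟨hprob, Z, hZ⟩ := h ε hε
  obtain ⟨c, hc₀, hc, hγc⟩ := hγ ε hε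
  rw [hγc, gibbsMeasure_smul_measure, gibbsMeasure_gibbsMeasure hV] at hZ
  refine ⟨hprob, c⁻¹ * Z, ?_⟩
  rw [mul_smul, ← hZ, smul_smul, ENNReal.inv_mul_cancel hc₀ hc, one_smul]

lemma IsGibbsFamily.gibbsMeasure_apply {ν μ : ℝ → Measure X} {Φ : ℝ → X → ℝ}
    (h : IsGibbsFamily ν Φ μ) {ε : ℝ} (hε : 0 < ε) (A : Set X) :
    gibbsMeasure (ν ε) (Φ ε) ε A = gibbsMeasure (ν ε) (Φ ε) ε univ * μ ε A := by
  obtain ⟨_, Z, hZ⟩ := h ε hε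
  simp [hZ]

end Gibbs

section LocallyUniform

lemma tendsto_prod_nhds_of_tendstoLocallyUniformly {ι X Y : Type*} [TopologicalSpace X]
    [UniformSpace Y] {F : ι → X → Y} {f : X → Y} {l : Filter ι} {x : X}
    (h : TendstoLocallyUniformly F f l) (hf : ContinuousAt f x) :
    Tendsto (fun q : ι × X => F q.1 q.2) (l ×ˢ 𝓝 x) (𝓝 (f x)) := by
  have hfst : TendstoLocallyUniformly (fun q : ι × X => F q.1) f (l ×ˢ 𝓝 x) := fun u hu y =>
    let ⟨t, ht, hev⟩ := h u hu y
    ⟨t, ht, tendsto_fst.eventually hev⟩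
  exact hfst.tendsto_comp hf tendsto_snd

lemma eventually_forall_mem_lt_of_tendstoLocallyUniformly {ι X : Type*} [TopologicalSpace X]
    {F : ι → X → ℝ} {f : X → ℝ} {l : Filter ι} (h : TendstoLocallyUniformly F f l)
    (hf : Continuous f) {K : Set X} (hK : IsCompact K) {a : ℝ} (ha : ∀ x ∈ K, a < f x) :
    ∀ᶠ i in l, ∀ x ∈ K, a < F i x := by
  have hnhds : ∀ᶠ q in l ×ˢ 𝓝ˢ K, a < F q.1 q.2 := by
    simp only [hK.prod_nhdsSet_eq_biSup, eventually_iSup]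
    exact fun x hx => (tendsto_prod_nhds_of_tendstoLocallyUniformly h
      hf.continuousAt).eventually_const_lt (ha x hx)
  exact eventually_prod_principal_iff.1 (hnhds.filter_mono (prod_mono_right _ principal_le_nhdsSet))

end LocallyUniform

section Laplace

variable {X : Type*} [TopologicalSpace X] [MeasurableSpace X] [OpensMeasurableSpace X]
  {ν : Measure X} {Φ : X → ℝ} {Φε : ℝ → X → ℝ}

lemma eventually_gibbsMeasure_le_of_isCompact [T2Space X] (hΦ : Continuous Φ)
    (h : TendstoLocallyUniformly Φε Φ (𝓝[>] 0)) {K : Set X} (hK : IsCompact K) {a : ℝ}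
    (ha : ∀ x ∈ K, a < Φ x) :
    ∀ᶠ ε in 𝓝[>] 0, gibbsMeasure ν (Φε ε) ε K ≤ ν K * expScale (-a) ε := by
  filter_upwards [eventually_forall_mem_lt_of_tendstoLocallyUniformly h hΦ hK ha,
    self_mem_nhdsWithin] with ε hlt hε
  rw [gibbsMeasure, withDensity_apply _ hK.measurableSet]
  calc ∫⁻ x in K, expScale (-Φε ε x) ε ∂ν ≤ ∫⁻ _ in K, expScale (-a) ε ∂ν :=
        setLIntegral_mono' hK.measurableSet fun x hx =>
          (expScale_le_expScale_iff hε).2 (neg_le_neg (hlt x hx).le)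
    _ = ν K * expScale (-a) ε := by rw [setLIntegral_const, mul_comm]

lemma eventually_expScale_le_gibbsMeasure_of_isOpen [ν.IsOpenPosMeasure] (hΦ : Continuous Φ)
    (h : TendstoLocallyUniformly Φε Φ (𝓝[>] 0)) {G : Set X} (hG : IsOpen G) {z : X} (hz : z ∈ G)
    {a : ℝ} (ha : Φ z < a) :
    ∀ᶠ ε in 𝓝[>] 0, expScale (-a) ε ≤ gibbsMeasure ν (Φε ε) ε G := by
  obtain ⟨b, hzb, hba⟩ := exists_between ha
  obtain ⟨s, hs, N, hN, hsub⟩ := mem_prod_iff.1 <|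
    (tendsto_prod_nhds_of_tendstoLocallyUniformly h hΦ.continuousAt).eventually_lt_const hzb
  obtain ⟨U, hUsub, hU, hzU⟩ := mem_nhds_iff.1 (inter_mem hN (hG.mem_nhds hz))
  filter_upwards [hs, self_mem_nhdsWithin,
    eventually_expScale_le_const_mul (hU.measure_pos ν ⟨z, hzU⟩).ne' (neg_lt_neg hba)]
    with ε hεs hε hvol
  calc expScale (-a) ε ≤ ν U * expScale (-b) ε := hvol
    _ = ∫⁻ _ in U, expScale (-b) ε ∂ν := by rw [setLIntegral_const, mul_comm]
    _ ≤ ∫⁻ x in U, expScale (-Φε ε x) ε ∂ν :=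
        setLIntegral_mono' hU.measurableSet fun x hx =>
          have hlt : Φε ε x < b := hsub (mk_mem_prod hεs (hUsub hx).1)
          (expScale_le_expScale_iff hε).2 (neg_le_neg hlt.le)
    _ = gibbsMeasure ν (Φε ε) ε U := (withDensity_apply _ hU.measurableSet).symm
    _ ≤ gibbsMeasure ν (Φε ε) ε G := measure_mono fun x hx => (hUsub hx).2

lemma ExpTight.exists_isCompact_eventually_le_two_mul [T2Space X] {μ : ℝ → Measure X}
    (ht : ExpTight μ) (hμ : ∀ ε, 0 < ε → IsProbabilityMeasure (μ ε)) :
    ∃ K : Set X, IsCompact K ∧ ∀ᶠ ε in 𝓝[>] 0, 1 ≤ 2 * μ ε K := by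
  obtain ⟨K, hK, hKc⟩ := ht.exists_isCompact_eventually_le (-1)
  refine ⟨K, hK, ?_⟩
  filter_upwards [hKc, self_mem_nhdsWithin, eventually_const_mul_expScale_le (C := 2)
    ENNReal.ofNat_ne_top neg_one_lt_zero] with ε hcompl hε hhalf
  have := hμ ε hε
  have hcompl' : 2 * μ ε Kᶜ ≤ 1 := by
    rw [← expScale_zero (ε := ε)]
    exact (mul_le_mul_right hcompl 2).trans hhalf
  refine (ENNReal.add_le_add_iff_right ENNReal.one_ne_top).1 ?_
  calc (1 : ENNReal) + 1 = 2 * (μ ε K + μ ε Kᶜ) := by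
        rw [prob_add_prob_compl hK.measurableSet, mul_one, one_add_one_eq_two]
    _ ≤ 2 * μ ε K + 1 := by rw [mul_add]; gcongr

variable {μ : ℝ → Measure X}

lemma IsGibbsFamily.exists_isCompact_partition_le [T2Space X]
    (hμ : IsGibbsFamily (fun _ => ν) Φε μ) (ht : ExpTight μ) :
    ∃ K : Set X, IsCompact K ∧ K.Nonempty ∧
      ∀ᶠ ε in 𝓝[>] 0, gibbsMeasure ν (Φε ε) ε univ ≤ 2 * gibbsMeasure ν (Φε ε) ε K := by
  obtain ⟨K, hK, hhalf⟩ := ht.exists_isCompact_eventually_le_two_mul fun ε hε => (hμ ε hε).1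
  refine ⟨K, hK, ?_, ?_⟩
  · obtain ⟨ε, hε⟩ := hhalf.exists
    refine nonempty_of_measure_ne_zero (μ := μ ε) fun h₀ => ?_
    simp [h₀] at hε
  · filter_upwards [hhalf, self_mem_nhdsWithin] with ε hle hε
    rw [hμ.gibbsMeasure_apply hε K, mul_left_comm]
    exact le_mul_of_one_le_right' hle

lemma IsGibbsFamily.exists_forall_lt_eventually_partition_le [T2Space X]
    [IsFiniteMeasureOnCompacts ν] (hμ : IsGibbsFamily (fun _ => ν) Φε μ) (ht : ExpTight μ)
    (hΦ : Continuous Φ) (h : TendstoLocallyUniformly Φε Φ (𝓝[>] 0)) :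
    ∃ x₀, ∀ a < Φ x₀, ∀ᶠ ε in 𝓝[>] 0, gibbsMeasure ν (Φε ε) ε univ ≤ expScale (-a) ε := by
  obtain ⟨K, hK, hKne, hhalf⟩ := hμ.exists_isCompact_partition_le ht
  obtain ⟨x₀, -, hx₀⟩ := hK.exists_isMinOn hKne hΦ.continuousOn
  refine ⟨x₀, fun a ha => ?_⟩
  obtain ⟨b, hab, hb⟩ := exists_between ha
  have hC : 2 * ν K ≠ ⊤ := ENNReal.mul_ne_top ENNReal.ofNat_ne_top hK.measure_ne_top
  filter_upwards [hhalf, eventually_const_mul_expScale_le hC (neg_lt_neg hab),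
    eventually_gibbsMeasure_le_of_isCompact (ν := ν) hΦ h hK fun x hx => hb.trans_le (hx₀ hx)]
    with ε hle habsorb hKle
  calc gibbsMeasure ν (Φε ε) ε univ ≤ 2 * gibbsMeasure ν (Φε ε) ε K := hle
    _ ≤ 2 * ν K * expScale (-b) ε := by rw [mul_assoc]; gcongr
    _ ≤ expScale (-a) ε := habsorb

variable [ν.IsOpenPosMeasure]

lemma le_of_forall_lt_eventually_partition_le (hΦ : Continuous Φ)
    (h : TendstoLocallyUniformly Φε Φ (𝓝[>] 0)) {c : ℝ}
    (hZ : ∀ a < c, ∀ᶠ ε in 𝓝[>] 0, gibbsMeasure ν (Φε ε) ε univ ≤ expScale (-a) ε) (x : X) :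
    c ≤ Φ x := by
  by_contra! hxc
  obtain ⟨a, hxa, hac⟩ := exists_between hxc
  obtain ⟨b, hab, hbc⟩ := exists_between hac
  obtain ⟨ε, hupper, hlower, hε⟩ := ((hZ b hbc).and
    ((eventually_expScale_le_gibbsMeasure_of_isOpen (ν := ν) hΦ h isOpen_univ (mem_univ x)
      hxa).and self_mem_nhdsWithin)).exists
  exact hab.not_ge (neg_le_neg_iff.1 ((expScale_le_expScale_iff hε).1 (hlower.trans hupper)))

lemma IsGibbsFamily.eventually_expScale_le_of_isOpen (hμ : IsGibbsFamily (fun _ => ν) Φε μ)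
    (hΦ : Continuous Φ) (h : TendstoLocallyUniformly Φε Φ (𝓝[>] 0)) {c : ℝ}
    (hZ : ∀ a < c, ∀ᶠ ε in 𝓝[>] 0, gibbsMeasure ν (Φε ε) ε univ ≤ expScale (-a) ε)
    {G : Set X} (hG : IsOpen G) {z : X} (hz : z ∈ G) {b : ℝ} (hb : b < c - Φ z) :
    ∀ᶠ ε in 𝓝[>] 0, expScale b ε ≤ μ ε G := by
  obtain ⟨a, hba, hac⟩ := exists_between (lt_sub_iff_add_lt.1 hb)
  filter_upwards [hZ a hac, self_mem_nhdsWithin, eventually_expScale_le_gibbsMeasure_of_isOpen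
    (ν := ν) hΦ h hG hz (lt_sub_iff_add_lt'.2 hba)] with ε hupper hε hlower
  rw [← expScale_add_le_mul_iff (a := -a)]
  calc expScale (-a + b) ε = expScale (-(a - b)) ε := by ring_nf
    _ ≤ gibbsMeasure ν (Φε ε) ε univ * μ ε G := hlower.trans_eq (hμ.gibbsMeasure_apply hε G)
    _ ≤ expScale (-a) ε * μ ε G := by gcongr

lemma IsGibbsFamily.eventually_le_expScale_of_isCompact [T2Space X] [IsFiniteMeasureOnCompacts ν]
    (hμ : IsGibbsFamily (fun _ => ν) Φε μ) (hΦ : Continuous Φ)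
    (h : TendstoLocallyUniformly Φε Φ (𝓝[>] 0)) {K : Set X} (hK : IsCompact K) {z : X} {a b : ℝ}
    (ha : ∀ x ∈ K, Φ z - Φ x < a) (hab : a < b) :
    ∀ᶠ ε in 𝓝[>] 0, μ ε K ≤ expScale b ε := by
  obtain ⟨c, hac, hcb⟩ := exists_between hab
  filter_upwards [self_mem_nhdsWithin,
    eventually_gibbsMeasure_le_of_isCompact (ν := ν) hΦ h hK fun x hx => sub_lt_comm.1 (ha x hx),
    eventually_const_mul_expScale_le (hK.measure_ne_top (μ := ν))
      (by linarith : -(Φ z - a) < c - Φ z),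
    eventually_expScale_le_gibbsMeasure_of_isOpen (ν := ν) hΦ h isOpen_univ (mem_univ z)
      (by linarith : Φ z < Φ z + (b - c))] with ε hε hupper habsorb hlower
  rw [← mul_le_expScale_add_iff (a := -(Φ z + (b - c)))]
  calc expScale (-(Φ z + (b - c))) ε * μ ε K ≤ gibbsMeasure ν (Φε ε) ε univ * μ ε K := by gcongr
    _ = gibbsMeasure ν (Φε ε) ε K := (hμ.gibbsMeasure_apply hε K).symm
    _ ≤ expScale (c - Φ z) ε := hupper.trans habsorb
    _ = expScale (-(Φ z + (b - c)) + b) ε := by ring_nf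

lemma IsGibbsFamily.hasWeakLDP [T2Space X] [IsFiniteMeasureOnCompacts ν]
    (hμ : IsGibbsFamily (fun _ => ν) Φε μ) (hΦ : Continuous Φ)
    (h : TendstoLocallyUniformly Φε Φ (𝓝[>] 0)) {x₀ : X}
    (hZ : ∀ a < Φ x₀, ∀ᶠ ε in 𝓝[>] 0, gibbsMeasure ν (Φε ε) ε univ ≤ expScale (-a) ε) :
    HasWeakLDP μ fun x => ((Φ x - Φ x₀ : ℝ) : EReal) where
  nonneg x := EReal.coe_nonneg.2 <|
    sub_nonneg.2 (le_of_forall_lt_eventually_partition_le hΦ h hZ x)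
  lowerSemicontinuous :=
    (continuous_coe_real_ereal.comp (hΦ.sub continuous_const)).lowerSemicontinuous
  limsup_le K hK := by
    refine limsup_sq_mul_log_le_iff.2 fun b hb => ?_
    obtain ⟨a, ha, hab⟩ := EReal.lt_iff_exists_real_btwn.1 hb
    refine hμ.eventually_le_expScale_of_isCompact hΦ h hK (z := x₀) (fun x hx => ?_)
      (EReal.coe_lt_coe_iff.1 hab)
    have hxa : -((Φ x - Φ x₀ : ℝ) : EReal) < a :=
      (EReal.neg_le_neg_iff.2 (iInf₂_le x hx)).trans_lt ha
    simpa only [← EReal.coe_neg, EReal.coe_lt_coe_iff, neg_sub] using hxa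
  le_liminf G hG := by
    refine le_liminf_sq_mul_log fun b hb => ?_
    have hInf := EReal.lt_neg_comm.1 hb
    simp only [iInf_lt_iff] at hInf
    obtain ⟨x, hx, hxb⟩ := hInf
    refine hμ.eventually_expScale_le_of_isOpen hΦ h hZ hG hx ?_
    rw [← EReal.coe_neg, EReal.coe_lt_coe_iff] at hxb
    linarith

theorem IsGibbsFamily.hasLDP [T2Space X] [IsFiniteMeasureOnCompacts ν]
    (hμ : IsGibbsFamily (fun _ => ν) Φε μ) (ht : ExpTight μ) (hΦ : Continuous Φ)
    (h : TendstoLocallyUniformly Φε Φ (𝓝[>] 0)) :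
    HasLDP μ fun x => (Φ x : EReal) - ⨅ y, (Φ y : EReal) := by
  obtain ⟨x₀, hZ⟩ := hμ.exists_forall_lt_eventually_partition_le ht hΦ h
  have hmin : ⨅ y, (Φ y : EReal) = Φ x₀ := (iInf_le _ x₀).antisymm <| le_iInf fun y =>
    EReal.coe_le_coe_iff.2 (le_of_forall_lt_eventually_partition_le hΦ h hZ y)
  simpa only [hmin, EReal.coe_sub] using (hμ.hasWeakLDP hΦ h hZ).hasLDP ht

end Laplace

section GammaConvergence

variable {X : Type*} [TopologicalSpace X] {G : ℝ → X → EReal} {z : X} {a : EReal}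

lemma gammaLiminf_le_gammaLimsup : GammaLiminf G z ≤ GammaLimsup G z :=
  iSup₂_mono fun _ _ => liminf_le_limsup

lemma gammaLimsup_le_of_tendsto (h : Tendsto (fun ε => G ε z) (𝓝[>] 0) (𝓝 a)) :
    GammaLimsup G z ≤ a :=
  iSup₂_le fun _ hN => h.limsup_eq ▸
    limsup_le_limsup (.of_forall fun _ => iInf₂_le z (mem_of_mem_nhds hN))

lemma le_gammaLiminf_of_tendsto
    (h : Tendsto (fun q : ℝ × X => G q.1 q.2) (𝓝[>] 0 ×ˢ 𝓝 z) (𝓝 a)) :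
    a ≤ GammaLiminf G z := by
  refine le_of_forall_lt fun b hb => ?_
  obtain ⟨c, hbc, hca⟩ := exists_between hb
  obtain ⟨s, hs, N, hN, hsub⟩ := mem_prod_iff.1 (h.eventually_const_lt hca)
  refine hbc.trans_le (le_trans ?_ (le_iSup₂ N hN))
  refine le_liminf_of_le (by isBoundedDefault) (mem_of_superset hs fun ε hε => ?_)
  exact le_iInf₂ fun y hy =>
    have hlt : c < G ε y := hsub (mk_mem_prod hε hy)
    hlt.le

theorem gammaLiminf_eq_and_gammaLimsup_eq_of_tendsto
    (h : Tendsto (fun q : ℝ × X => G q.1 q.2) (𝓝[>] 0 ×ˢ 𝓝 z) (𝓝 a)) :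
    GammaLiminf G z = a ∧ GammaLimsup G z = a := by
  have hlower := le_gammaLiminf_of_tendsto h
  have hupper : GammaLimsup G z ≤ a :=
    gammaLimsup_le_of_tendsto (h.comp (tendsto_id.prodMk tendsto_const_nhds))
  exact ⟨(gammaLiminf_le_gammaLimsup.trans hupper).antisymm hlower,
    hupper.antisymm (hlower.trans gammaLiminf_le_gammaLimsup)⟩

end GammaConvergence

section Gaussian

lemma map_withDensity_comp {X Y : Type*} [MeasurableSpace X] [MeasurableSpace Y] {ν : Measure X}
    {f : X → Y} {g : Y → ENNReal} (hf : Measurable f) (hg : Measurable g) :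
    (ν.withDensity (g ∘ f)).map f = (ν.map f).withDensity g := by
  ext A hA
  rw [Measure.map_apply hf hA, withDensity_apply _ (hf hA), withDensity_apply _ hA,
    setLIntegral_map hA hg hf]
  rfl

lemma map_smul_gaussian_eq_smul_gibbsMeasure {E : Type*} [NormedAddCommGroup E] [NormedSpace ℝ E]
    [FiniteDimensional ℝ E] [MeasurableSpace E] [BorelSpace E] (ν : Measure E)
    [ν.IsAddHaarMeasure] {c ε : ℝ} (hc : 0 ≤ c) (hε : 0 < ε) :
    (ν.withDensity fun x => ENNReal.ofReal (c * exp (-‖x‖ ^ 2 / 2))).map (ε • ·) =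
      (ENNReal.ofReal c * ENNReal.ofReal |(ε ^ Module.finrank ℝ E)⁻¹|) •
        gibbsMeasure ν (fun x => ‖x‖ ^ 2 / 2) ε := by
  have hmeas : Measurable fun x : E => expScale (-(‖x‖ ^ 2 / 2)) ε := by unfold expScale; fun_prop
  have hdens : (fun x : E => ENNReal.ofReal (c * exp (-‖x‖ ^ 2 / 2))) =
      (ENNReal.ofReal c • fun y : E => expScale (-(‖y‖ ^ 2 / 2)) ε) ∘ (ε • ·) := by
    ext x
    have hexp : -(‖ε • x‖ ^ 2 / 2) / ε ^ 2 = -‖x‖ ^ 2 / 2 := by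
      rw [norm_smul, norm_of_nonneg hε.le]
      field_simp
    simp only [Function.comp_apply, Pi.smul_apply, smul_eq_mul, expScale, hexp,
      ENNReal.ofReal_mul hc]
  rw [hdens, map_withDensity_comp (measurable_const_smul ε) (hmeas.const_smul _),
    Measure.map_addHaar_smul ν hε.ne', withDensity_smul_measure, withDensity_smul _ hmeas,
    smul_smul, mul_comm, gibbsMeasure]

end Gaussian

section Expansion

lemma abs_expansion_sub_le {k : ℕ} {a : ℕ → ℝ} {r ε C : ℝ} (hε₀ : 0 ≤ ε) (hε₁ : ε ≤ 1)
    (ha : ∀ i ≤ k, |a i| ≤ C) (hr : |r| ≤ C) :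
    |(∑ i ∈ Finset.range (k + 1), ε ^ i / (Nat.factorial i) * a i) + ε ^ (k + 1) * r - a 0| ≤
      (k + 1) * (ε * C) := by
  have hpow : ∀ i : ℕ, ε ^ (i + 1) ≤ ε := fun i => pow_le_of_le_one hε₀ hε₁ i.succ_ne_zero
  have hterm : ∀ i ∈ Finset.range k,
      |ε ^ (i + 1) / (Nat.factorial (i + 1)) * a (i + 1)| ≤ ε * C := by
    intro i hi
    have hfact : (1 : ℝ) ≤ Nat.factorial (i + 1) := mod_cast Nat.factorial_pos _
    rw [abs_mul, abs_of_nonneg (by positivity)]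
    exact mul_le_mul ((div_le_self (by positivity) hfact).trans (hpow i))
      (ha _ (Finset.mem_range.1 hi)) (abs_nonneg _) hε₀
  have hrem : |ε ^ (k + 1) * r| ≤ ε * C := by
    rw [abs_mul, abs_of_nonneg (by positivity)]
    exact mul_le_mul (hpow k) hr (abs_nonneg _) hε₀
  calc |(∑ i ∈ Finset.range (k + 1), ε ^ i / (Nat.factorial i) * a i) + ε ^ (k + 1) * r - a 0|
      = |(∑ i ∈ Finset.range k, ε ^ (i + 1) / (Nat.factorial (i + 1)) * a (i + 1)) +
          ε ^ (k + 1) * r| := by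
        rw [Finset.sum_range_succ']
        congr 1
        simp only [pow_zero, Nat.factorial_zero, Nat.cast_one, div_one, one_mul]
        ring
    _ ≤ ∑ i ∈ Finset.range k, |ε ^ (i + 1) / (Nat.factorial (i + 1)) * a (i + 1)| +
          |ε ^ (k + 1) * r| :=
        (abs_add_le _ _).trans (by gcongr; exact Finset.abs_sum_le_sum_abs _ _)
    _ ≤ k * (ε * C) + ε * C := by
        gcongr
        simpa using Finset.sum_le_card_nsmul _ _ _ hterm
    _ = (k + 1) * (ε * C) := by ring

lemma tendstoLocallyUniformly_of_expansion {X : Type*} [TopologicalSpace X] {n : ℕ} (hn : 1 ≤ n)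
    {Fs : ℕ → X → ℝ} {R Fe : ℝ → X → ℝ}
    (hexp : ∀ ε : ℝ, 0 < ε → ∀ y,
      Fe ε y = (∑ i ∈ Finset.range n, ε ^ i / (Nat.factorial i) * Fs i y) + ε ^ n * R ε y)
    (hbd : ∀ z, ∃ N ∈ 𝓝 z, ∃ C : ℝ, 0 < C ∧ ∃ ε₀ : ℝ, 0 < ε₀ ∧
      (∀ y ∈ N, ∀ i ≤ n - 1, |Fs i y| ≤ C) ∧
      (∀ y ∈ N, ∀ ε : ℝ, 0 < ε → ε < ε₀ → |R ε y| ≤ C)) :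
    TendstoLocallyUniformly Fe (Fs 0) (𝓝[>] 0) := by
  obtain ⟨k, rfl⟩ := Nat.exists_eq_add_of_le' hn
  refine Metric.tendstoLocallyUniformly_iff.2 fun η hη z => ?_
  obtain ⟨N, hN, C, hC, ε₀, hε₀, hFs, hR⟩ := hbd z
  refine ⟨N, hN, ?_⟩
  filter_upwards [Ioo_mem_nhdsGT hε₀, Ioo_mem_nhdsGT one_pos,
    Ioo_mem_nhdsGT (show 0 < η / ((k + 1) * C) by positivity)] with ε hεR hε₁ hεη y hy
  rw [dist_comm, dist_eq, hexp ε hεR.1]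
  calc _ ≤ (k + 1) * (ε * C) :=
        abs_expansion_sub_le hεR.1.le hε₁.2.le (hFs y hy) (hR y hy ε hεR.1 hεR.2)
    _ = ε * ((k + 1) * C) := by ring
    _ < η := (lt_div_iff₀ (by positivity)).1 hεη.2

end Expansion

theorem onsager_machlup_to_freidlin_wentzell_general {E : Type*} [NormedAddCommGroup E]
    [InnerProductSpace ℝ E] [FiniteDimensional ℝ E] [MeasurableSpace E] [BorelSpace E]
    {γ : Measure E}
    (hγ : γ = volume.withDensity fun x => ENNReal.ofReal
      ((2 * π) ^ (-(Module.finrank ℝ E : ℝ) / 2) * exp (-‖x‖ ^ 2 / 2)))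
    {γε : ℝ → Measure E} (hγε : ∀ ε : ℝ, γε ε = γ.map fun x => ε • x)
    {F₀ : E → ℝ} {Fe : ℝ → E → ℝ} (hF₀ : Continuous F₀)
    (hFe : TendstoLocallyUniformly Fe F₀ (𝓝[>] 0))
    (hZ : ∀ ε : ℝ, 0 < ε →
      0 < ∫⁻ y, ENNReal.ofReal (exp (-Fe ε y / ε ^ 2)) ∂(γε ε) ∧
      ∫⁻ y, ENNReal.ofReal (exp (-Fe ε y / ε ^ 2)) ∂(γε ε) < ⊤)
    {μ : ℝ → Measure E}
    (hμ : ∀ ε : ℝ, 0 < ε → ∀ A, MeasurableSet A →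
      μ ε A = (∫⁻ y in A, ENNReal.ofReal (exp (-Fe ε y / ε ^ 2)) ∂(γε ε)) /
        (∫⁻ y, ENNReal.ofReal (exp (-Fe ε y / ε ^ 2)) ∂(γε ε)))
    (htight : ExpTight μ)
    {OMε : ℝ → E → ℝ}
    (hOM : ∀ ε : ℝ, 0 < ε → ∀ z, OMε ε z = (Fe ε z + ‖z‖ ^ 2 / 2) / ε ^ 2)
    {FW : E → EReal}
    (hFW : ∀ z, FW z = ((F₀ z + ‖z‖ ^ 2 / 2 : ℝ) : EReal) -
      ⨅ w : E, ((F₀ w + ‖w‖ ^ 2 / 2 : ℝ) : EReal)) :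
    HasLDP μ FW ∧
    (∀ z, Tendsto (fun ε : ℝ => ε ^ 2 * OMε ε z) (𝓝[>] 0) (𝓝 (F₀ z + ‖z‖ ^ 2 / 2))) ∧
    (∀ z,
      GammaLiminf (fun ε y => ((ε ^ 2 * OMε ε y : ℝ) : EReal)) z =
        ((F₀ z + ‖z‖ ^ 2 / 2 : ℝ) : EReal) ∧
      GammaLimsup (fun ε y => ((ε ^ 2 * OMε ε y : ℝ) : EReal)) z =
        ((F₀ z + ‖z‖ ^ 2 / 2 : ℝ) : EReal)) := by
  have hΦ : Continuous fun z => F₀ z + ‖z‖ ^ 2 / 2 := by fun_prop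
  have hΦε : TendstoLocallyUniformly (fun ε z => Fe ε z + ‖z‖ ^ 2 / 2)
      (fun z => F₀ z + ‖z‖ ^ 2 / 2) (𝓝[>] 0) := by
    simpa only [Metric.tendstoLocallyUniformly_iff, dist_add_right] using hFe
  have hOMε : ∀ z, Tendsto (fun q : ℝ × E => q.1 ^ 2 * OMε q.1 q.2) (𝓝[>] 0 ×ˢ 𝓝 z)
      (𝓝 (F₀ z + ‖z‖ ^ 2 / 2)) := fun z => by
    refine (tendsto_prod_nhds_of_tendstoLocallyUniformly hΦε hΦ.continuousAt).congr' ?_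
    filter_upwards [tendsto_fst.eventually self_mem_nhdsWithin] with ⟨ε, y⟩ (hε : 0 < ε)
    rw [hOM ε hε, mul_div_cancel₀ _ (pow_pos hε 2).ne']
  have hgauss : ∀ ε, 0 < ε → ∃ c : ENNReal, c ≠ 0 ∧ c ≠ ⊤ ∧
      γε ε = c • gibbsMeasure volume (fun z => ‖z‖ ^ 2 / 2) ε := fun ε hε =>
    by
    rw [hγε, hγ, map_smul_gaussian_eq_smul_gibbsMeasure _ (by positivity) hε]
    exact ⟨_, by positivity, ENNReal.mul_ne_top ENNReal.ofReal_ne_top ENNReal.ofReal_ne_top, rfl⟩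
  have hgibbs := (isGibbsFamily_of_apply_eq_div hZ hμ).of_eq_smul_gibbsMeasure
    (by fun_prop : Measurable fun z : E => ‖z‖ ^ 2 / 2) hgauss
  refine ⟨funext hFW ▸ hgibbs.hasLDP htight hΦ hΦε, fun z => ?_, fun z => ?_⟩
  · exact (hOMε z).comp (tendsto_id.prodMk tendsto_const_nhds)
  · exact gammaLiminf_eq_and_gammaLimsup_eq_of_tendsto
      ((continuous_coe_real_ereal.tendsto _).comp (hOMε z))

/-- **Finite-dimensional main theorem: Onsager–Machlup converges to Freidlin–Wentzell.**
For tilted scalings of the standard Gaussian on `ℝ^d`, the family `(μ ε)` satisfies an LDP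
with good rate function `FW`, and the rescaled Onsager–Machlup functions
`ε² OM_ε = Fε + ‖·‖²/2` converge to `F₀ + ‖·‖²/2` both pointwise and in the Γ-sense. -/
theorem onsager_machlup_to_freidlin_wentzell (d : ℕ)
    (γ : Measure (EuclideanSpace ℝ (Fin d)))
    (hγ : γ = volume.withDensity
      (fun x => ENNReal.ofReal ((2 * π) ^ (-(d : ℝ) / 2) * Real.exp (-‖x‖ ^ 2 / 2))))
    (γε : ℝ → Measure (EuclideanSpace ℝ (Fin d)))
    (hγε : ∀ ε : ℝ, γε ε = Measure.map (fun x => ε • x) γ)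
    (n : ℕ) (hn : 1 ≤ n)
    (Fs : ℕ → EuclideanSpace ℝ (Fin d) → ℝ) (R : ℝ → EuclideanSpace ℝ (Fin d) → ℝ)
    (Fe : ℝ → EuclideanSpace ℝ (Fin d) → ℝ)
    (hmeasFs : ∀ i, Measurable (Fs i)) (hmeasR : ∀ ε, Measurable (R ε))
    (hexp : ∀ ε : ℝ, 0 < ε → ∀ y,
      Fe ε y = (∑ i ∈ Finset.range n, ε ^ i / (Nat.factorial i) * Fs i y) + ε ^ n * R ε y)
    (hF₀ : Continuous (Fs 0))
    (hR : ∀ y, Tendsto (fun ε : ℝ => R ε y) (𝓝[>] (0 : ℝ)) (𝓝 0))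
    (hbd : ∀ z, ∃ N ∈ 𝓝 z, ∃ C : ℝ, 0 < C ∧ ∃ ε₀ : ℝ, 0 < ε₀ ∧
      (∀ y ∈ N, ∀ i ≤ n - 1, |Fs i y| ≤ C) ∧
      (∀ y ∈ N, ∀ ε : ℝ, 0 < ε → ε < ε₀ → |R ε y| ≤ C))
    (hmom : ∀ i < n, ∀ γ' : ℝ, 0 < γ' →
      Filter.limsup (fun ε : ℝ => ((ε ^ 2 : ℝ) : EReal) *
          ENNReal.log (∫⁻ y, ENNReal.ofReal
            (Real.exp (γ' * max |Fs i y| |R ε y| / ε ^ 2)) ∂(γε ε)))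
        (𝓝[>] (0 : ℝ)) < (⊤ : EReal))
    (hZ : ∀ ε : ℝ, 0 < ε →
      0 < ∫⁻ y, ENNReal.ofReal (Real.exp (-Fe ε y / ε ^ 2)) ∂(γε ε) ∧
      ∫⁻ y, ENNReal.ofReal (Real.exp (-Fe ε y / ε ^ 2)) ∂(γε ε) < ⊤)
    (μ : ℝ → Measure (EuclideanSpace ℝ (Fin d)))
    (hμ : ∀ ε : ℝ, 0 < ε → ∀ A, MeasurableSet A →
      μ ε A = (∫⁻ y in A, ENNReal.ofReal (Real.exp (-Fe ε y / ε ^ 2)) ∂(γε ε)) /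
        (∫⁻ y, ENNReal.ofReal (Real.exp (-Fe ε y / ε ^ 2)) ∂(γε ε)))
    (htight : ExpTight μ)
    (OMε : ℝ → EuclideanSpace ℝ (Fin d) → ℝ)
    (hOM : ∀ ε : ℝ, 0 < ε → ∀ z, OMε ε z = (Fe ε z + ‖z‖ ^ 2 / 2) / ε ^ 2)
    (FW : EuclideanSpace ℝ (Fin d) → EReal)
    (hFW : ∀ z, FW z = ((Fs 0 z + ‖z‖ ^ 2 / 2 : ℝ) : EReal) -
      ⨅ w : EuclideanSpace ℝ (Fin d), ((Fs 0 w + ‖w‖ ^ 2 / 2 : ℝ) : EReal)) :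
    HasLDP μ FW ∧
    (∀ z, Tendsto (fun ε : ℝ => ε ^ 2 * OMε ε z) (𝓝[>] (0 : ℝ))
      (𝓝 (Fs 0 z + ‖z‖ ^ 2 / 2))) ∧
    (∀ z,
      GammaLiminf (fun ε y => ((ε ^ 2 * OMε ε y : ℝ) : EReal)) z =
        ((Fs 0 z + ‖z‖ ^ 2 / 2 : ℝ) : EReal) ∧
      GammaLimsup (fun ε y => ((ε ^ 2 * OMε ε y : ℝ) : EReal)) z =
        ((Fs 0 z + ‖z‖ ^ 2 / 2 : ℝ) : EReal)) := by
  exact onsager_machlup_to_freidlin_wentzell_general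
    (by simpa only [finrank_euclideanSpace_fin] using hγ) hγε hF₀
    (tendstoLocallyUniformly_of_expansion hn hexp hbd) hZ hμ htight hOM hFW
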